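/- Let m₁, m₂ ≥ 4 be integers and set n = m₁ + m₂ + 1. If n ≥ 14, then W(C_{m₁,m₂}^n) < W(L_{n,n−3}). -/

import Mathlib

/-!
Both distance functions split coordinatewise. In a graph obtained by chaining cycles and paths
end to end, every vertex has a projection to each piece, and the distance of two vertices is the
sum over the pieces of the distances of their projections. Only one inequality is needed for each
graph: for the dumbbell the formula is an upper bound (`dumbbell_dist_le`, by exhibiting routes and
using the triangle inequality), for the lollipop it is a lower bound (`le_lollipop_dist`, because
the formula grows by at most one along an edge).

Summing over ordered pairs needs only that every vertex of `C_m` has transmission `⌊m² / 4⌋`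
(`sum_cyc`). A cycle `C_m` with `k` further vertices projecting to a single one of its vertices
contributes `(m + 2k) ⌊m² / 4⌋` (`sum_cyc_clip`, `sum_cyc_shift`); the path pieces are elementary.
With `s = m₁ + m₂` and `p = m₁ m₂`, the resulting inequality reduces, apart from parity
corrections, to `2s² - 28s + 48 < p (s - 12)`. Since `p ≥ 4 (s - 4)`, this follows from
`2 (s - 6) (s - 12) > 0`, which is where `n ≥ 14` enters (`wiener_arith`).
-/

open SimpleGraph

variable {V : Type*}

/-- The distance (transmission) of a vertex `v`: the sum of distances from `v`
to all other vertices. -/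
noncomputable def vertexDistance [Fintype V] (G : SimpleGraph V) (v : V) : ℕ :=
  ∑ u : V, G.dist v u

/-- The Wiener index: the sum of distances over all unordered pairs of vertices. -/
noncomputable def wienerIndex [Fintype V] (G : SimpleGraph V) : ℕ :=
  (∑ u : V, ∑ v : V, G.dist u v) / 2

/-- `v` is a cut vertex of `G` if deleting it leaves a disconnected
(or empty) graph. -/
def IsCutVertex (G : SimpleGraph V) (v : V) : Prop :=
  ¬ (G.induce ({v}ᶜ : Set V)).Connected

/-- The number of cut vertices of `G`. -/
noncomputable def cutVertexCount (G : SimpleGraph V) : ℕ :=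
  {v : V | IsCutVertex G v}.ncard

/-- `B` is (the vertex set of) a block of `G`: a maximal connected subgraph on at
least two vertices that has no cut vertex of its own. -/
def IsBlock (G : SimpleGraph V) (B : Set V) : Prop :=
  2 ≤ B.ncard ∧ (G.induce B).Connected ∧
    (∀ v : B, ¬ IsCutVertex (G.induce B) v) ∧
    ∀ C : Set V, B ⊆ C → (G.induce C).Connected →
      (∀ v : C, ¬ IsCutVertex (G.induce C) v) → C = B

/-- A pendant block: a block containing exactly one cut vertex of `G`. -/
def IsPendantBlock (G : SimpleGraph V) (B : Set V) : Prop :=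
  IsBlock G B ∧ {v ∈ B | IsCutVertex G v}.ncard = 1

/-- An s-pendant block: a pendant block which shares its cut vertex with exactly
one non-pendant block of `G`. -/
def IsSPendantBlock (G : SimpleGraph V) (B : Set V) : Prop :=
  IsPendantBlock G B ∧
    ∀ w ∈ B, IsCutVertex G w →
      {C : Set V | IsBlock G C ∧ ¬ IsPendantBlock G C ∧ w ∈ C}.ncard = 1

/-- The graph `L_{n,g}`: a cycle `C_g` on the vertices `0, …, g-1` (consecutive
edges together with the chord `{0, g-1}`) with the path `g-1, g, …, n-1`
attached at the vertex `g-1`.  For `g < n` its unique pendant vertex is `n-1`.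
For `g = n` this is the cycle `C_n`. -/
def lollipop (n g : ℕ) : SimpleGraph (Fin n) :=
  SimpleGraph.fromRel (fun i j =>
    (i : ℕ) + 1 = (j : ℕ) ∨ ((i : ℕ) = 0 ∧ (j : ℕ) = g - 1))

/-- The cycle `C_n` on `n` vertices. -/
def cycleG (n : ℕ) : SimpleGraph (Fin n) := lollipop n n

/-- The graph `C_{m₁,m₂}ⁿ`: a cycle `C_{m₁}` on `0, …, m₁-1`, a cycle `C_{m₂}`
on `n-m₂, …, n-1`, joined by the path `m₁-1, m₁, …, n-m₂` (which degenerates to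
a single identified vertex when `n = m₁+m₂-1`). -/
def dumbbell (n m₁ m₂ : ℕ) : SimpleGraph (Fin n) :=
  SimpleGraph.fromRel (fun i j =>
    (i : ℕ) + 1 = (j : ℕ) ∨ ((i : ℕ) = 0 ∧ (j : ℕ) = m₁ - 1)
      ∨ ((i : ℕ) = n - m₂ ∧ (j : ℕ) = n - 1))

/-- Identify the vertex `w` of `H` with the vertex `u` of `G`:  the resulting
graph on `U ⊕ {x : W // x ≠ w}` whose edges are those of `G`, those of `H` not
meeting `w`, and the edges of `H` at `w` re-attached at `u`. -/
def glue {U W : Type*} (G : SimpleGraph U) (u : U) (H : SimpleGraph W) (w : W) :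
    SimpleGraph (U ⊕ {x : W // x ≠ w}) :=
  SimpleGraph.fromRel (fun a b =>
    match a, b with
    | Sum.inl x, Sum.inl y => G.Adj x y
    | Sum.inl x, Sum.inr y => x = u ∧ H.Adj w y.val
    | Sum.inr x, Sum.inr y => H.Adj x.val y.val
    | _, _ => False)

/-! ### Transmission in a cycle -/

/-- The distance of `i` and `j` along the path `0, 1, 2, …`, written with truncated subtraction. -/
def gap (i j : ℕ) : ℕ := (i - j) + (j - i)

/-- The distance of `i` and `j` in the cycle on `0, …, m - 1`, for `i, j < m`. -/
def cyc (m i j : ℕ) : ℕ := min (gap i j) (m - gap i j)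

lemma cyc_comm (m i j : ℕ) : cyc m i j = cyc m j i := by
  unfold cyc gap; omega

lemma sum_cyc_zero (m : ℕ) : ∑ j ∈ Finset.range m, cyc m 0 j = m ^ 2 / 4 := by
  induction m using Nat.twoStepInduction with
  | zero => simp
  | one => simp [cyc, gap]
  | more m ih _ =>
    -- Removing the first and last vertex lowers each remaining distance by one.
    rw [Finset.sum_range_succ, Finset.sum_range_succ']
    have h : ∀ j ∈ Finset.range m, cyc (m + 2) 0 (j + 1) = cyc m 0 j + 1 := by
      intro j hj
      have := Finset.mem_range.1 hj
      unfold cyc gap; omega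
    rw [Finset.sum_congr rfl h, Finset.sum_add_distrib, ih]
    have h0 : cyc (m + 2) 0 0 = 0 := by unfold cyc gap; omega
    have h1 : cyc (m + 2) 0 (m + 1) = 1 := by unfold cyc gap; omega
    rw [h0, h1]
    simp only [Finset.sum_const, Finset.card_range, smul_eq_mul, mul_one]
    have : (m + 2) ^ 2 = m ^ 2 + 4 * (m + 1) := by ring
    omega

/-- Every vertex of the cycle on `m` vertices has transmission `⌊m² / 4⌋`; the index `i` is moved
to `0` one rotation at a time. -/
lemma sum_cyc (m i : ℕ) (hi : i < m) : ∑ j ∈ Finset.range m, cyc m i j = m ^ 2 / 4 := by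
  induction i with
  | zero => exact sum_cyc_zero m
  | succ i ih =>
    rw [← ih (by omega)]
    obtain ⟨k, rfl⟩ : ∃ k, m = k + 1 := ⟨m - 1, by omega⟩
    rw [Finset.sum_range_succ', Finset.sum_range_succ]
    have h : ∀ j ∈ Finset.range k, cyc (k + 1) (i + 1) (j + 1) = cyc (k + 1) i j := by
      intro j _
      unfold cyc gap; omega
    rw [Finset.sum_congr rfl h]
    congr 1
    unfold cyc gap; omega

lemma sum_cyc' (m i : ℕ) (hi : i < m) : ∑ j ∈ Finset.range m, cyc m j i = m ^ 2 / 4 := by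
  rw [← sum_cyc m i hi]
  exact Finset.sum_congr rfl fun j _ => cyc_comm m j i

/-! ### Sums over ordered pairs -/

/-- If all but the first `m` indices project to the index `q`, a double sum splits into blocks. -/
lemma sum_blocks (F : ℕ → ℕ → ℕ) (p : ℕ → ℕ) (m k q : ℕ) (hp : ∀ i < m, p i = i)
    (hq : ∀ i < k, p (m + i) = q) :
    ∑ i ∈ Finset.range (m + k), ∑ j ∈ Finset.range (m + k), F (p i) (p j) =
      ∑ i ∈ Finset.range m, ∑ j ∈ Finset.range m, F i j + k * ∑ i ∈ Finset.range m, F i q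
        + k * ∑ j ∈ Finset.range m, F q j + k * (k * F q q) := by
  have inner : ∀ x, ∑ j ∈ Finset.range (m + k), F x (p j) =
      ∑ j ∈ Finset.range m, F x j + k * F x q := by
    intro x
    rw [Finset.sum_range_add]
    congr 1
    · exact Finset.sum_congr rfl fun j hj => by rw [hp j (Finset.mem_range.1 hj)]
    · rw [Finset.sum_congr rfl fun j hj => by rw [hq j (Finset.mem_range.1 hj)]]
      simp
  simp only [inner]
  rw [Finset.sum_range_add,
    Finset.sum_congr rfl fun i hi => by rw [hp i (Finset.mem_range.1 hi)],
    Finset.sum_congr (s₁ := Finset.range k) rfl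
      fun i hi => by rw [hq i (Finset.mem_range.1 hi)]]
  simp only [Finset.sum_add_distrib, Finset.sum_const, Finset.card_range, smul_eq_mul,
    ← Finset.mul_sum]
  ring

/-- A cycle on the first `m` indices, with `k` further indices projecting to its last vertex. -/
lemma sum_cyc_clip (m k : ℕ) (hm : 0 < m) :
    ∑ i ∈ Finset.range (m + k), ∑ j ∈ Finset.range (m + k),
      cyc m (min i (m - 1)) (min j (m - 1)) = (m + 2 * k) * (m ^ 2 / 4) := by
  rw [sum_blocks (cyc m) (fun i => min i (m - 1)) m k (m - 1)
    (fun i hi => by omega) (fun i hi => by omega),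
    sum_cyc m _ (by omega), sum_cyc' m _ (by omega),
    Finset.sum_congr rfl fun i hi => sum_cyc m i (Finset.mem_range.1 hi)]
  have h0 : cyc m (m - 1) (m - 1) = 0 := by unfold cyc gap; omega
  rw [h0]
  simp only [Finset.sum_const, Finset.card_range, smul_eq_mul]
  ring

/-- A double sum over an initial segment may be taken in reverse order. -/
lemma sum_reflect₂ (F : ℕ → ℕ → ℕ) (n : ℕ) :
    ∑ i ∈ Finset.range n, ∑ j ∈ Finset.range n, F i j =
      ∑ i ∈ Finset.range n, ∑ j ∈ Finset.range n, F (n - 1 - i) (n - 1 - j) := by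
  rw [← Finset.sum_range_reflect]
  exact Finset.sum_congr rfl fun i _ => (Finset.sum_range_reflect _ _).symm

/-- The mirror image of `sum_cyc_clip`: the cycle occupies the last `m` indices, and the first `k`
indices project to its first vertex. -/
lemma sum_cyc_shift (m k : ℕ) (hm : 0 < m) :
    ∑ i ∈ Finset.range (k + m), ∑ j ∈ Finset.range (k + m), cyc m (i - k) (j - k)
      = (m + 2 * k) * (m ^ 2 / 4) := by
  rw [← sum_cyc_clip m k hm, sum_reflect₂, Nat.add_comm k m]
  refine Finset.sum_congr rfl fun i hi => Finset.sum_congr rfl fun j hj => ?_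
  rw [Finset.mem_range] at hi hj
  unfold cyc gap; omega

/-- The contribution of the tail of three pendant edges in the lollipop. -/
lemma sum_tail (g : ℕ) (hg : 0 < g) :
    ∑ i ∈ Finset.range (g + 3), ∑ j ∈ Finset.range (g + 3), gap (i - (g - 1)) (j - (g - 1))
      = 12 * g + 8 := by
  have z : ∀ i ∈ Finset.range g, i - (g - 1) = 0 := by
    intro i hi
    have := Finset.mem_range.1 hi
    omega
  have e0 : g - (g - 1) = 1 := by omega
  have e1 : g + 1 - (g - 1) = 2 := by omega
  have e2 : g + 2 - (g - 1) = 3 := by omega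
  have inner : ∀ x, ∑ j ∈ Finset.range (g + 3), gap x (j - (g - 1)) =
      g * gap x 0 + gap x 1 + gap x 2 + gap x 3 := by
    intro x
    simp only [Finset.sum_range_succ]
    rw [Finset.sum_congr rfl fun j hj => by rw [z j hj], e0, e1, e2]
    simp
  simp only [inner]
  simp only [Finset.sum_range_succ]
  rw [Finset.sum_congr rfl fun j hj => by rw [z j hj], e0, e1, e2]
  simp [gap]
  ring

/-- The contribution of the two bridge edges in the dumbbell; the vertices project to the bridge
path as `0` (first cycle), `1` (middle vertex) and `2` (second cycle). -/
lemma sum_bridge (a b : ℕ) (ha : 0 < a) :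
    ∑ i ∈ Finset.range (a + 1 + b), ∑ j ∈ Finset.range (a + 1 + b),
      gap (min (i - (a - 1)) 2) (min (j - (a - 1)) 2) = 2 * (a + b + 2 * (a * b)) := by
  have z : ∀ i ∈ Finset.range a, min (i - (a - 1)) 2 = 0 := by
    intro i hi
    have := Finset.mem_range.1 hi
    omega
  have w : ∀ i ∈ Finset.range b, min (a + 1 + i - (a - 1)) 2 = 2 := by
    intro i hi
    omega
  have e0 : min (a - (a - 1)) 2 = 1 := by omega
  have inner : ∀ f : ℕ → ℕ, ∑ j ∈ Finset.range (a + 1 + b), f (min (j - (a - 1)) 2) =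
      a * f 0 + f 1 + b * f 2 := by
    intro f
    rw [Finset.sum_range_add, Finset.sum_range_succ,
      Finset.sum_congr rfl fun j hj => by rw [z j hj],
      Finset.sum_congr (s₁ := Finset.range b) rfl fun j hj => by rw [w j hj], e0]
    simp
  rw [inner fun x => ∑ j ∈ Finset.range (a + 1 + b), gap x (min (j - (a - 1)) 2),
    inner, inner, inner]
  simp [gap]
  ring

/-! ### Distances in the two graphs -/

/-- A graph on `Fin n` in which consecutive indices are adjacent is connected. -/
lemma connected_of_succ {n : ℕ} (hn : 0 < n) (G : SimpleGraph (Fin n))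
    (hG : ∀ i j : Fin n, (i : ℕ) + 1 = j → G.Adj i j) : G.Connected := by
  obtain ⟨k, rfl⟩ : ∃ k, n = k + 1 := ⟨n - 1, by omega⟩
  refine (pathGraph_connected k).mono fun i j h => ?_
  rw [pathGraph_adj] at h
  exact h.elim (hG i j) fun h => (hG j i h).symm

lemma dist_le_gap {n : ℕ} (G : SimpleGraph (Fin n))
    (hG : ∀ i j : Fin n, (i : ℕ) + 1 = j → G.Adj i j) (i j : Fin n) :
    G.dist i j ≤ gap i j := by
  have hc : G.Connected := connected_of_succ i.pos G hG
  have key : ∀ k : ℕ, ∀ i j : Fin n, (i : ℕ) + k = j → G.dist i j ≤ k := by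
    intro k
    induction k with
    | zero =>
      intro i j h
      obtain rfl : i = j := Fin.ext (by omega)
      simp
    | succ k ih =>
      intro i j h
      have hlt : (i : ℕ) + k < n := by omega
      have h1 := ih i ⟨i + k, hlt⟩ rfl
      have h2 : G.dist ⟨i + k, hlt⟩ j = 1 := dist_eq_one_iff_adj.2 (hG _ _ (by simp; omega))
      have h3 := hc.dist_triangle (u := i) (v := ⟨i + k, hlt⟩) (w := j)
      omega
  rcases le_total (i : ℕ) j with h | h
  · have := key (j - i) i j (by omega)
    unfold gap; omega
  · have := key (i - j) j i (by omega)
    rw [dist_comm]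
    unfold gap; omega

/-- A function that vanishes at `u` and grows by at most one along each edge is bounded by the
distance from `u`. -/
lemma le_dist_of_adj {G : SimpleGraph V} (hc : G.Connected) (u : V) (f : V → ℕ)
    (h0 : f u = 0) (hf : ∀ x y, G.Adj x y → f y ≤ f x + 1) (v : V) : f v ≤ G.dist u v := by
  obtain ⟨p, hp⟩ := hc.exists_walk_length_eq_dist u v
  rw [← hp]
  have key : ∀ (a b : V) (p : G.Walk a b), f b ≤ f a + p.length := by
    intro a b p
    induction p with
    | nil => simp
    | cons h q ih =>
      have := hf _ _ h
      rw [Walk.length_cons]; omega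
  have := key u v p
  omega

lemma lollipop_succ (n g : ℕ) (i j : Fin n) (h : (i : ℕ) + 1 = j) : (lollipop n g).Adj i j := by
  rw [lollipop, fromRel_adj]
  exact ⟨fun e => by subst e; omega, Or.inl (Or.inl h)⟩

lemma dumbbell_succ (n a b : ℕ) (i j : Fin n) (h : (i : ℕ) + 1 = j) : (dumbbell n a b).Adj i j := by
  rw [dumbbell, fromRel_adj]
  exact ⟨fun e => by subst e; omega, Or.inl (Or.inl h)⟩

lemma cyc_step (m a x y : ℕ) (ha : a < m) (hx : x < m) (hy : y < m)
    (h : x + 1 = y ∨ x = 0 ∧ y = m - 1) : cyc m a y ≤ cyc m a x + 1 ∧ cyc m a x ≤ cyc m a y + 1 := by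
  unfold cyc gap
  rcases h with h | ⟨rfl, rfl⟩ <;> omega

/-- Along an edge, at most one of the two projections of a lollipop vertex moves. -/
lemma lollipop_step (g a b x y : ℕ) (hg : 0 < g) (ha : a < g)
    (h : x + 1 = y ∨ x = 0 ∧ y = g - 1) :
    cyc g a (min y (g - 1)) + gap b (y - (g - 1))
        ≤ cyc g a (min x (g - 1)) + gap b (x - (g - 1)) + 1 ∧
      cyc g a (min x (g - 1)) + gap b (x - (g - 1))
        ≤ cyc g a (min y (g - 1)) + gap b (y - (g - 1)) + 1 := by
  by_cases hy : y ≤ g - 1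
  · have hx : x ≤ g - 1 := by omega
    have := cyc_step g a x y ha (by omega) (by omega) h
    rw [min_eq_left hy, min_eq_left hx, Nat.sub_eq_zero_of_le hy, Nat.sub_eq_zero_of_le hx]
    omega
  · have hx : g - 1 ≤ x := by omega
    rw [min_eq_right (by omega : g - 1 ≤ y), min_eq_right hx]
    unfold gap; omega

lemma le_lollipop_dist (g k : ℕ) (hg : 0 < g) (i j : Fin (g + k)) :
    cyc g (min i (g - 1)) (min j (g - 1)) + gap (i - (g - 1)) (j - (g - 1))
      ≤ (lollipop (g + k) g).dist i j := by
  refine le_dist_of_adj (connected_of_succ i.pos _ (lollipop_succ _ _)) i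
    (fun j : Fin (g + k) => cyc g (min (i : ℕ) (g - 1)) (min (j : ℕ) (g - 1))
      + gap ((i : ℕ) - (g - 1)) ((j : ℕ) - (g - 1))) ?_ ?_ j
  · unfold cyc gap; simp
  · intro x y h
    rw [lollipop, fromRel_adj] at h
    obtain ⟨-, h | h⟩ := h
    · exact (lollipop_step g _ _ x y hg (by omega) h).1
    · exact (lollipop_step g _ _ y x hg (by omega) h).2

lemma dumbbell_dist_le (a b : ℕ) (ha : 3 ≤ a) (hb : 3 ≤ b) (i j : Fin (a + 1 + b)) :
    (dumbbell (a + 1 + b) a b).dist i j ≤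
      cyc a (min i (a - 1)) (min j (a - 1)) + gap (min (i - (a - 1)) 2) (min (j - (a - 1)) 2)
        + cyc b (i - (a + 1)) (j - (a + 1)) := by
  set G := dumbbell (a + 1 + b) a b with hGdef
  have hc : G.Connected := connected_of_succ i.pos _ (dumbbell_succ _ _ _)
  have hgap : ∀ i j, G.dist i j ≤ gap i j := dist_le_gap G (dumbbell_succ _ _ _)
  have tri : ∀ x y z, G.dist x z ≤ G.dist x y + G.dist y z := fun _ _ _ => hc.dist_triangle
  -- The two ends of each cycle, joined by its closing edge.
  let p₀ : Fin (a + 1 + b) := ⟨0, by omega⟩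
  let p₁ : Fin (a + 1 + b) := ⟨a - 1, by omega⟩
  let q₀ : Fin (a + 1 + b) := ⟨a + 1, by omega⟩
  let q₁ : Fin (a + 1 + b) := ⟨a + b, by omega⟩
  have ep : G.dist p₀ p₁ = 1 := by
    rw [dist_eq_one_iff_adj, hGdef, dumbbell, fromRel_adj]
    refine ⟨fun e => ?_, Or.inl (Or.inr (Or.inl ⟨rfl, rfl⟩))⟩
    have := congrArg Fin.val e
    simp only [p₀, p₁] at this; omega
  have eq : G.dist q₀ q₁ = 1 := by
    rw [dist_eq_one_iff_adj, hGdef, dumbbell, fromRel_adj]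
    refine ⟨fun e => ?_, Or.inl (Or.inr (Or.inr ⟨?_, ?_⟩))⟩
    · have := congrArg Fin.val e
      simp only [q₀, q₁] at this; omega
    · simp only [q₀]; omega
    · simp only [q₁]; omega
  -- Within a cycle, go either directly or around through the closing edge.
  have hP : ∀ x y : Fin (a + 1 + b), (x : ℕ) ≤ y → (y : ℕ) < a → G.dist x y ≤ cyc a x y := by
    intro x y hxy hy
    have h1 := hgap x y
    have h2 := tri x p₀ y
    have h3 := tri p₀ p₁ y
    have h4 := hgap x p₀
    have h5 := hgap p₁ y
    simp only [p₀, p₁] at h2 h3 h4 h5 ep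
    unfold gap at h1 h4 h5
    unfold cyc gap; omega
  have hQ : ∀ x y : Fin (a + 1 + b), (x : ℕ) ≤ y → a + 1 ≤ (x : ℕ) →
      G.dist x y ≤ cyc b (x - (a + 1)) (y - (a + 1)) := by
    intro x y hxy hx
    have h1 := hgap x y
    have h2 := tri x q₀ y
    have h3 := tri q₀ q₁ y
    have h4 := hgap x q₀
    have h5 := hgap q₁ y
    have hy := y.isLt
    simp only [q₀, q₁] at h2 h3 h4 h5 eq
    unfold gap at h1 h4 h5
    unfold cyc gap; omega
  have key : ∀ i j : Fin (a + 1 + b), (i : ℕ) ≤ j → G.dist i j ≤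
      cyc a (min i (a - 1)) (min j (a - 1)) + gap (min (i - (a - 1)) 2) (min (j - (a - 1)) 2)
        + cyc b (i - (a + 1)) (j - (a + 1)) := by
    intro i j hij
    by_cases hi : (i : ℕ) < a
    · by_cases hj : (j : ℕ) < a
      · have := hP i j hij hj
        rw [min_eq_left (by omega : (i : ℕ) ≤ a - 1), min_eq_left (by omega : (j : ℕ) ≤ a - 1)]
        omega
      · have h1 := hP i p₁ (by simp only [p₁]; omega) (by simp only [p₁]; omega)
        have h2 := tri i p₁ j
        rw [min_eq_left (by omega : (i : ℕ) ≤ a - 1), min_eq_right (by omega : a - 1 ≤ (j : ℕ))]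
        by_cases hj' : (j : ℕ) = a
        · have h3 := hgap p₁ j
          have h4 : gap p₁ j = gap (min ((i : ℕ) - (a - 1)) 2) (min (j - (a - 1)) 2) := by
            simp only [p₁]; unfold gap; omega
          simp only [p₁] at *
          omega
        · have h3 := tri p₁ q₀ j
          have h4 := hgap p₁ q₀
          have h5 : gap p₁ q₀ = gap (min ((i : ℕ) - (a - 1)) 2) (min (j - (a - 1)) 2) := by
            simp only [p₁, q₀]; unfold gap; omega
          have h6 := hQ q₀ j (by simp only [q₀]; omega) (by simp only [q₀]; omega)
          have h7 : (i : ℕ) - (a + 1) = (q₀ : ℕ) - (a + 1) := by simp only [q₀]; omega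
          rw [h7]
          simp only [p₁, q₀] at *
          omega
    · by_cases hi' : (i : ℕ) = a
      · by_cases hj : (j : ℕ) = a
        · obtain rfl : i = j := Fin.ext (by omega)
          simp
        · have h3 := tri i q₀ j
          have h4 := hgap i q₀
          have h5 : gap i q₀ = gap (min ((i : ℕ) - (a - 1)) 2) (min (j - (a - 1)) 2) := by
            simp only [q₀]; unfold gap; omega
          have h6 := hQ q₀ j (by simp only [q₀]; omega) (by simp only [q₀]; omega)
          have h7 : (i : ℕ) - (a + 1) = (q₀ : ℕ) - (a + 1) := by simp only [q₀]; omega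
          rw [h7]
          omega
      · have := hQ i j hij (by omega)
        omega
  rcases le_total (i : ℕ) j with h | h
  · exact key i j h
  · have := key j i h
    rw [dist_comm, cyc_comm a, cyc_comm b]
    have hs : ∀ x y, gap x y = gap y x := fun x y => by unfold gap; omega
    rwa [hs (min ((i : ℕ) - (a - 1)) 2)]

/-! ### Comparison -/

lemma sum_dumbbell_le (a b : ℕ) (ha : 3 ≤ a) (hb : 3 ≤ b) :
    ∑ i, ∑ j, (dumbbell (a + 1 + b) a b).dist i j ≤
      (a + 2 * (1 + b)) * (a ^ 2 / 4) + 2 * (a + b + 2 * (a * b))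
        + (b + 2 * (a + 1)) * (b ^ 2 / 4) := by
  refine (Finset.sum_le_sum fun i _ => Finset.sum_le_sum fun j _ =>
    dumbbell_dist_le a b ha hb i j).trans (le_of_eq ?_)
  rw [← sum_bridge a b (by omega), ← sum_cyc_shift b (a + 1) (by omega),
    ← sum_cyc_clip a (1 + b) (by omega), ← Nat.add_assoc]
  simp only [Finset.sum_range, Finset.sum_add_distrib]

lemma le_sum_lollipop (g : ℕ) (hg : 0 < g) :
    (g + 6) * (g ^ 2 / 4) + (12 * g + 8) ≤ ∑ i, ∑ j, (lollipop (g + 3) g).dist i j := by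
  refine le_trans (le_of_eq ?_) (Finset.sum_le_sum fun i _ => Finset.sum_le_sum fun j _ =>
    le_lollipop_dist g 3 hg i j)
  rw [← sum_tail g hg, show g + 6 = g + 2 * 3 by ring, ← sum_cyc_clip g 3 hg]
  simp only [Finset.sum_range, Finset.sum_add_distrib]

/-- The ordered-pair sums differ by at least `2`, so that halving keeps the inequality strict. -/
lemma wiener_arith (a b g : ℕ) (ha : 4 ≤ a) (hb : 4 ≤ b) (hab : 13 ≤ a + b) (hg : g + 2 = a + b) :
    (a + 2 * (1 + b)) * (a ^ 2 / 4) + 2 * (a + b + 2 * (a * b))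
        + (b + 2 * (a + 1)) * (b ^ 2 / 4) + 2 ≤ (g + 6) * (g ^ 2 / 4) + (12 * g + 8) := by
  have par : ∀ m : ℕ, ∃ t e : ℤ, ((m ^ 2 / 4 : ℕ) : ℤ) = t ∧ 4 * t = (m : ℤ) ^ 2 - e ∧
      e = (m : ℤ) % 2 := by
    intro m
    refine ⟨_, (m : ℤ) % 2, rfl, ?_, rfl⟩
    rcases Nat.even_or_odd' m with ⟨k, rfl | rfl⟩
    · have : (2 * k) ^ 2 / 4 = k ^ 2 := by
        rw [show (2 * k) ^ 2 = 4 * k ^ 2 by ring]; omega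
      rw [this]; push_cast
      have : (2 * (k : ℤ)) % 2 = 0 := by omega
      rw [this]; ring
    · have : (2 * k + 1) ^ 2 / 4 = k ^ 2 + k := by
        rw [show (2 * k + 1) ^ 2 = 4 * (k ^ 2 + k) + 1 by ring]; omega
      rw [this]; push_cast
      have : (2 * (k : ℤ) + 1) % 2 = 1 := by omega
      rw [this]; ring
  obtain ⟨t, e, ht, ht', he⟩ := par a
  obtain ⟨u, f, hu, hu', hf⟩ := par b
  obtain ⟨w, d, hw, hw', hd⟩ := par g
  zify
  push_cast at ht hu hw
  rw [ht, hu, hw]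
  obtain ⟨x, rfl⟩ := Nat.exists_eq_add_of_le ha
  obtain ⟨y, rfl⟩ := Nat.exists_eq_add_of_le hb
  obtain rfl : g = x + y + 6 := by omega
  have hxy : (5 : ℤ) ≤ x + y := by omega
  have hx : (0 : ℤ) ≤ x := by omega
  have hy : (0 : ℤ) ≤ y := by omega
  push_cast at *
  -- The parity corrections have a favourable sign.
  have corr : d * ((x + y + 6 : ℤ) + 6) ≤
      e * ((4 + x : ℤ) + 2 * (1 + (4 + y))) + f * ((4 + y : ℤ) + 2 * ((4 + x) + 1)) := by
    have hcase : (e = 0 ∧ f = 0 ∧ d = 0) ∨ (e = 1 ∧ f = 0 ∧ d = 1) ∨ (e = 0 ∧ f = 1 ∧ d = 1) ∨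
        (e = 1 ∧ f = 1 ∧ d = 0) := by omega
    rcases hcase with ⟨rfl, rfl, rfl⟩ | ⟨rfl, rfl, rfl⟩ | ⟨rfl, rfl, rfl⟩ | ⟨rfl, rfl, rfl⟩ <;>
      linarith
  -- `p - 4 (s - 4) = x * y`, and `(s - 6) (s - 12) ≥ 7`.
  have k1 : (0 : ℤ) ≤ (x * y) * (x + y - 4) := by
    apply mul_nonneg (mul_nonneg hx hy); linarith
  have k2 : (7 : ℤ) ≤ (x + y + 2) * (x + y - 4) := by nlinarith
  have T : 4 * ((4 + x + 2 * (1 + (4 + y))) * t : ℤ) =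
      (4 + x + 2 * (1 + (4 + y))) * ((4 + x) ^ 2 - e) := by rw [← ht']; ring
  have U : 4 * ((4 + y + 2 * (4 + x + 1)) * u : ℤ) =
      (4 + y + 2 * (4 + x + 1)) * ((4 + y) ^ 2 - f) := by rw [← hu']; ring
  have Wd : 4 * ((x + y + 6 + 6) * w : ℤ) = (x + y + 6 + 6) * ((x + y + 6) ^ 2 - d) := by
    rw [← hw']; ring
  -- Integrality turns the gap `7 / 2` into `2`.
  nlinarith [T, U, Wd, corr, k1, k2]

/-- For `m₁, m₂ ≥ 4`, `n = m₁ + m₂ + 1` and `n ≥ 14`: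
`W(C_{m₁,m₂}^n) < W(L_{n,n-3})`. -/
theorem stmt18 (n m₁ m₂ : ℕ) (h₁ : 4 ≤ m₁) (h₂ : 4 ≤ m₂)
    (hn : n = m₁ + m₂ + 1) (h14 : 14 ≤ n) :
    wienerIndex (dumbbell n m₁ m₂) < wienerIndex (lollipop n (n - 3)) := by
  have hd := sum_dumbbell_le m₁ m₂ (by omega) (by omega)
  obtain ⟨g, hg⟩ : ∃ g, g + 2 = m₁ + m₂ := ⟨m₁ + m₂ - 2, by omega⟩
  have hl := le_sum_lollipop g (by omega)
  have har := wiener_arith m₁ m₂ g h₁ h₂ (by omega) hg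
  have e1 : wienerIndex (dumbbell n m₁ m₂) =
      (∑ i, ∑ j, (dumbbell (m₁ + 1 + m₂) m₁ m₂).dist i j) / 2 := by
    obtain rfl : n = m₁ + 1 + m₂ := by omega
    rfl
  have e2 : wienerIndex (lollipop n (n - 3)) =
      (∑ i, ∑ j, (lollipop (g + 3) g).dist i j) / 2 := by
    obtain rfl : n = g + 3 := by omega
    rfl
  rw [e1, e2]
  omega
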